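/- arXiv:math/9811004 — 2 statements merged into one kernel-verified Lean document; each statement's English description precedes it below -/
import Mathlib

section
/- Let P be a finite regular p-group. Then the nilpotency class of P is at most f(P) + 1. -/
/-- `℧_1(H) = ⟨h^p : h ∈ H⟩` for a subgroup `H`. -/
def MhoOne (p : ℕ) {P : Type} [Group P] (H : Subgroup P) : Subgroup P :=
  Subgroup.closure {y : P | ∃ x ∈ H, y = x ^ p}

/-- A `p`-group `P` is regular if for all `x y : P` there is
`z ∈ ℧_1(γ_2(⟨x,y⟩))` with `x^p * y^p = (x*y)^p * z`. -/
def IsRegularPGroup (p : ℕ) (P : Type) [Group P] : Prop :=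
  ∀ x y : P,
    ∃ z ∈ MhoOne p ⁅Subgroup.closure {x, y}, Subgroup.closure {x, y}⁆,
      x ^ p * y ^ p = (x * y) ^ p * z

/-!
In a regular `p`-group `P` one has `x ^ p = y ^ p ↔ (x⁻¹ * y) ^ p = 1`, by well-founded induction
on `⟨x, y⟩`: the elements `y * x * y⁻¹` and `x⁻¹`, whose product is `⁅y, x⁆`, generate a proper
subgroup of `⟨x, y⟩` unless `x` and `y` commute. Hence `Ω = {u | u ^ p = 1}` is a normal subgroup,
every subgroup containing all `p`-th powers has index at most `|Ω|`, and modulo any normal subgroup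
`⁅x ^ p, y⁆` vanishes if and only if `⁅x, y⁆ ^ p` does.

Induct on the exponent by passing to `P ⧸ Ω`. If the latter has class at most `m`, then
`γ_{m+1}(P) ≤ Ω`, and the last equivalence carries this down the lower central series to
`x ^ p ∈ ζ_m(P)` for every `x`. So `ζ_m(P)` has index at most `|Ω| = p ^ w`, and for `m ≥ 1` the
upper central series needs at most `w - 1` further steps to reach `P`, since a group is never a
nontrivial cyclic extension of its centre.
-/

open Subgroup
open scoped commutatorElement

section NilpotentGroups

variable {G : Type*} [Group G]

lemma normalClosure_singleton_ne_top [Finite G] [Group.IsNilpotent G] {x : G}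
    (hx : zpowers x ≠ ⊤) : normalClosure {x} ≠ ⊤ := by
  obtain ⟨M, hM, hxM⟩ := (eq_top_or_exists_le_coatom (zpowers x)).resolve_left hx
  have : M.Normal := Group.normalizerCondition_of_isNilpotent.normal_of_coatom M hM
  exact ne_top_of_le_ne_top hM.1
    (normalClosure_le_normal (Set.singleton_subset_iff.2 (hxM (mem_zpowers x))))

lemma closure_conj_inv_lt_closure_pair [Finite G] [Group.IsNilpotent G] {x y : G}
    (hxy : ¬Commute x y) : closure {y * x * y⁻¹, x⁻¹} < closure {x, y} := by
  set H := closure {x, y}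
  let x' : H := ⟨x, subset_closure (by simp)⟩
  let y' : H := ⟨y, subset_closure (by simp)⟩
  have hx' : zpowers x' ≠ ⊤ := by
    intro h
    obtain ⟨k, hk⟩ := mem_zpowers_iff.1 (h ▸ mem_top y')
    have hk' : x ^ k = y := congrArg Subtype.val hk
    exact hxy (hk' ▸ (Commute.refl x).zpow_right k)
  have hmem : x' ∈ normalClosure {x'} := subset_normalClosure (Set.mem_singleton x')
  calc
    closure {y * x * y⁻¹, x⁻¹} ≤ (normalClosure {x'}).map H.subtype := by
      rw [closure_le]
      rintro _ (rfl | rfl)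
      · exact ⟨_, normalClosure_normal.conj_mem _ hmem y', rfl⟩
      · exact ⟨_, inv_mem hmem, rfl⟩
    _ < (⊤ : Subgroup H).map H.subtype :=
      map_subtype_lt_map_subtype.2 (normalClosure_singleton_ne_top hx').lt_top
    _ = H := by rw [← MonoidHom.range_eq_map, H.range_subtype]

lemma commutator_closure_closure_le {s : Set G} {S : Subgroup G}
    (hS : closure s ≤ normalizer S) (h : ∀ a ∈ s, ∀ b ∈ s, ⁅a, b⁆ ∈ S) :
    ⁅closure s, closure s⁆ ≤ S := by
  have conj_mem := le_normalizer_iff.1 hS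
  rw [commutator_le]
  intro a ha b hb
  induction ha, hb using closure_induction₂ with
  | mem a b ha hb => exact h a ha b hb
  | one_left => simp
  | one_right => simp
  | mul_left a b c ha _ _ hac hbc =>
    rw [commutatorElement_mul_left_eq_conj_mul]
    exact mul_mem (conj_mem a ha _ hbc) hac
  | mul_right b c a hb _ _ hab hac =>
    rw [commutatorElement_mul_right_eq_mul_conj, mul_assoc _ b, mul_assoc _ (b * _), mul_assoc]
    exact mul_mem hab (by simpa only [mul_assoc] using conj_mem b hb _ hac)
  | inv_left a b ha _ hab =>
    rw [commutatorElement_inv_left, ← commutatorElement_inv a b]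
    simpa only [inv_inv] using conj_mem a⁻¹ (inv_mem ha) _ (inv_mem hab)
  | inv_right a b _ hb hab =>
    rw [commutatorElement_inv_right, ← commutatorElement_inv a b]
    simpa only [inv_inv] using conj_mem b⁻¹ (inv_mem hb) _ (inv_mem hab)

lemma lowerCentralSeries_le_of_quotient_eq_bot {N : Subgroup G} [N.Normal] {m : ℕ}
    (h : Subgroup.lowerCentralSeries (⊤ : Subgroup (G ⧸ N)) m = ⊥) :
    Subgroup.lowerCentralSeries (⊤ : Subgroup G) m ≤ N := by
  rwa [← map_top_of_surjective _ (QuotientGroup.mk'_surjective N), ← map_lowerCentralSeries,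
    Subgroup.map_eq_bot_iff, QuotientGroup.ker_mk'] at h

lemma upperCentralSeries_succ_eq_top_of_index_dvd_prime {p : ℕ} (hp : p.Prime) {m : ℕ}
    (h : (Subgroup.upperCentralSeries G (m + 1)).index ∣ p) :
    Subgroup.upperCentralSeries G (m + 1) = ⊤ := by
  have := Fact.mk hp
  have hcomap : Subgroup.upperCentralSeries G (m + 1) =
      (center (G ⧸ Subgroup.upperCentralSeries G m)).comap (QuotientGroup.mk' _) :=
    Subgroup.upperCentralSeriesStep_eq_comap_center (Subgroup.upperCentralSeries G m)
  rw [hcomap, index_comap_of_surjective _ (QuotientGroup.mk'_surjective _)] at h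
  set Q := G ⧸ Subgroup.upperCentralSeries G m
  have : IsCyclic (Q ⧸ center Q) := isCyclic_of_card_dvd_prime h
  have : IsMulCommutative Q :=
    (QuotientGroup.mk' (center Q)).isMulCommutative_of_isCyclic_of_ker_le_center
      (QuotientGroup.ker_mk' _).le
  rw [hcomap, center_eq_top_iff.2 this, comap_top]

lemma upperCentralSeries_eq_top_of_index_dvd_prime_pow [Group.IsNilpotent G] {p : ℕ}
    (hp : p.Prime) {m v : ℕ} (h : (Subgroup.upperCentralSeries G (m + 1)).index ∣ p ^ (v + 1)) :
    Subgroup.upperCentralSeries G (m + v + 1) = ⊤ := by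
  induction v generalizing m with
  | zero => exact upperCentralSeries_succ_eq_top_of_index_dvd_prime hp (by simpa using h)
  | succ v ih =>
    set ζ := Subgroup.upperCentralSeries G
    have hmono : Monotone ζ := Subgroup.upperCentralSeries_mono G
    by_cases htop : ζ (m + 1) = ⊤
    · exact top_le_iff.1 (htop ▸ hmono (by lia))
    rw [show m + (v + 1) + 1 = m + 1 + v + 1 by lia]
    apply ih
    have hle : ζ (m + 1) ≤ ζ (m + 2) := hmono (Nat.le_succ _)
    have hmul := relIndex_mul_index hle
    have hrel : (ζ (m + 1)).relIndex (ζ (m + 2)) ≠ 1 := fun hrel =>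
      htop (Subgroup.upperCentralSeries.eq_top (Nat.succ_ne_self (m + 1)).symm
        (hle.antisymm (relIndex_eq_one.1 hrel)))
    have hdvd : p ∣ (ζ (m + 1)).relIndex (ζ (m + 2)) := by
      obtain ⟨i, -, hi⟩ := (Nat.dvd_prime_pow hp).1 ((Dvd.intro _ hmul).trans h)
      rw [hi] at hrel ⊢
      exact dvd_pow_self p (by rintro rfl; exact hrel (pow_zero p))
    refine Nat.dvd_of_mul_dvd_mul_left hp.pos ?_
    rw [← pow_succ']
    exact (mul_dvd_mul_right hdvd _).trans (hmul ▸ h)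

lemma exponent_dvd_exponent_quotient_mul {N : Subgroup G} [N.Normal] {k : ℕ}
    (hN : ∀ u ∈ N, u ^ k = 1) : Monoid.exponent G ∣ Monoid.exponent (G ⧸ N) * k := by
  refine Monoid.exponent_dvd_of_forall_pow_eq_one fun g => ?_
  rw [pow_mul]
  apply hN
  rw [← QuotientGroup.eq_one_iff, QuotientGroup.mk_pow, Monoid.pow_exponent_eq_one]

lemma le_of_pow_dvd_exponent {p e n : ℕ} (hp : p.Prime) (hcard : Nat.card G = p ^ n)
    (hexp : p ^ e ∣ Monoid.exponent G) : e ≤ n :=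
  (Nat.pow_dvd_pow_iff_le_right hp.one_lt).1 (hcard ▸ hexp.trans Group.exponent_dvd_nat_card)

end NilpotentGroups

section OmegaOne

variable {G : Type*} [Group G] (p : ℕ) (K : Subgroup G)

/-- `Ω_1(K) = ⟨u ∈ K : u^p = 1⟩` for a subgroup `K`. As for `MhoOne`, the generators need not
form a subgroup in general. -/
def omegaOne : Subgroup G :=
  closure {u | u ∈ K ∧ u ^ p = 1}

variable {p K}

lemma omegaOne_le : omegaOne p K ≤ K :=
  (closure_le _).2 fun _ hu => hu.1

lemma mem_omegaOne_of_pow_eq_one {u : G} (hu : u ∈ K) (hup : u ^ p = 1) : u ∈ omegaOne p K :=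
  subset_closure ⟨hu, hup⟩

lemma pow_eq_one_of_mem_omegaOne
    (hmul : ∀ u ∈ K, ∀ v ∈ K, u ^ p = 1 → v ^ p = 1 → (u * v) ^ p = 1)
    {u : G} (hu : u ∈ omegaOne p K) : u ^ p = 1 := by
  suffices u ∈ K ∧ u ^ p = 1 from this.2
  induction hu using closure_induction with
  | mem _ hu => exact hu
  | one => exact ⟨one_mem K, one_pow p⟩
  | mul u v _ _ hu hv => exact ⟨mul_mem hu.1 hv.1, hmul u hu.1 v hv.1 hu.2 hv.2⟩
  | inv u _ hu => exact ⟨inv_mem hu.1, by rw [inv_pow, hu.2, inv_one]⟩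

lemma normalizer_le_normalizer_omegaOne :
    normalizer (K : Set G) ≤ normalizer (omegaOne p K : Set G) := by
  refine le_normalizer_closure_iff.2 fun g hg u hu => mem_omegaOne_of_pow_eq_one ?_ ?_
  · exact (mem_normalizer_iff.1 hg u).1 hu.1
  · rw [conj_pow, hu.2, mul_one, mul_inv_cancel]

instance normal_omegaOne [hK : K.Normal] : (omegaOne p K).Normal :=
  normalizer_eq_top_iff.1 (top_le_iff.1
    ((normalizer_eq_top_iff.2 hK).ge.trans normalizer_le_normalizer_omegaOne))

lemma dvd_card_omegaOne [Finite G] (hp : p.Prime) (h : p ∣ Nat.card K) :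
    p ∣ Nat.card (omegaOne p K) := by
  have := Fact.mk hp
  obtain ⟨u, hu⟩ := exists_prime_orderOf_dvd_card' p h
  rw [← orderOf_coe] at hu
  have hup : (u : G) ^ p = 1 := by rw [← hu, pow_orderOf_eq_one]
  exact hu.symm.dvd.trans
    (Subgroup.orderOf_dvd_natCard _ (mem_omegaOne_of_pow_eq_one u.2 hup))

lemma exists_card_omegaOne_eq_pow_succ [Finite G] (hp : p.Prime) (hK : IsPGroup p K)
    (h : p ∣ Nat.card K) : ∃ w, Nat.card (omegaOne p K) = p ^ (w + 1) := by
  have := Fact.mk hp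
  have hdvd := dvd_card_omegaOne hp h
  obtain ⟨k, hk⟩ := IsPGroup.iff_card.1 (hK.to_le omegaOne_le)
  have hk0 : k ≠ 0 := by
    rintro rfl
    exact hp.not_dvd_one (by rwa [hk, pow_zero] at hdvd)
  exact ⟨k - 1, by rw [hk, Nat.sub_one_add_one hk0]⟩

end OmegaOne

namespace IsRegularPGroup

variable {p : ℕ} {P : Type} [Group P]

lemma pow_mul_pow_eq_mul_pow (hreg : IsRegularPGroup p P) {x y : P}
    (hmul : ∀ u ∈ ⁅closure {x, y}, closure {x, y}⁆, ∀ v ∈ ⁅closure {x, y}, closure {x, y}⁆,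
      u ^ p = 1 → v ^ p = 1 → (u * v) ^ p = 1)
    (hyx : ⁅y, x⁆ ^ p = 1) : x ^ p * y ^ p = (x * y) ^ p := by
  set H := closure {x, y}
  have hx : x ∈ H := subset_closure (by simp)
  have hy : y ∈ H := subset_closure (by simp)
  have hΩ : ⁅H, H⁆ ≤ omegaOne p ⁅H, H⁆ := by
    have hyxΩ := mem_omegaOne_of_pow_eq_one (commutator_mem_commutator hy hx) hyx
    apply commutator_closure_closure_le
    · exact (normalizer_commutator_ge_left H H).trans normalizer_le_normalizer_omegaOne
    · rintro _ (rfl | rfl) _ (rfl | rfl)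
      · simp
      · rw [← commutatorElement_inv]
        exact inv_mem hyxΩ
      · exact hyxΩ
      · simp
  have hMho : MhoOne p ⁅H, H⁆ ≤ ⊥ := by
    rw [MhoOne, closure_le]
    rintro _ ⟨u, hu, rfl⟩
    exact pow_eq_one_of_mem_omegaOne hmul (hΩ hu)
  obtain ⟨z, hz, hxyz⟩ := hreg x y
  rw [hxyz, mem_bot.1 (hMho hz), mul_one]

lemma mul_pow_eq_one [Finite P] [Group.IsNilpotent P] (hreg : IsRegularPGroup p P) {x y : P}
    (h : x ^ p * y ^ p = 1) : (x * y) ^ p = 1 := by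
  induction hH : closure {x, y} using WellFoundedLT.induction generalizing x y with
  | ind H ih =>
  subst hH
  by_cases hxy : Commute x y
  · rw [hxy.mul_pow, h]
  have hlt := closure_conj_inv_lt_closure_pair hxy
  have hderived_lt := Group.IsSolvable.commutator_lt_of_ne_bot hlt.ne_bot
  rw [← hreg.pow_mul_pow_eq_mul_pow ?mul ?commutator, h]
  case mul =>
    intro u hu v hv hup hvp
    have huv : closure {u, v} ≤ ⁅closure {x, y}, closure {x, y}⁆ :=
      (closure_le _).2 (Set.pair_subset hu hv)
    exact ih _ (huv.trans_lt hderived_lt) (by rw [hup, hvp, mul_one]) rfl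
  case commutator =>
    refine ih _ hlt ?_ rfl
    have hcomm : Commute y (x ^ p) := by
      rw [eq_inv_of_mul_eq_one_left h]
      exact (Commute.self_pow y p).inv_right
    rw [conj_pow, inv_pow, hcomm.eq, mul_inv_cancel_right, mul_inv_cancel]

lemma mul_pow_eq_pow [Finite P] [Group.IsNilpotent P] (hreg : IsRegularPGroup p P) {x y : P}
    (hx : x ^ p = 1) : (x * y) ^ p = y ^ p := by
  rw [← hreg.pow_mul_pow_eq_mul_pow, hx, one_mul]
  · exact fun u _ v _ hu hv => hreg.mul_pow_eq_one (by rw [hu, hv, mul_one])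
  · rw [commutatorElement_def]
    exact hreg.mul_pow_eq_one (by simp [conj_pow, hx])

lemma inv_mul_pow_eq_one_iff [Finite P] [Group.IsNilpotent P] (hreg : IsRegularPGroup p P)
    {x y : P} : (x⁻¹ * y) ^ p = 1 ↔ x ^ p = y ^ p where
  mp h := by
    have hinv := hreg.mul_pow_eq_pow (y := y⁻¹) h
    rwa [mul_inv_cancel_right, inv_pow, inv_pow, inv_inj] at hinv
  mpr h := hreg.mul_pow_eq_one (by rw [inv_pow, h, inv_mul_cancel])

lemma commutator_pow_left_eq_one_iff [Finite P] [Group.IsNilpotent P]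
    (hreg : IsRegularPGroup p P) {x y : P} : ⁅x ^ p, y⁆ = 1 ↔ ⁅x, y⁆ ^ p = 1 := by
  have h : ⁅x, y⁆ = (x⁻¹)⁻¹ * (y * x⁻¹ * y⁻¹) := by group
  rw [h, hreg.inv_mul_pow_eq_one_iff, conj_pow, inv_pow, commutatorElement_eq_one_iff_commute,
    eq_mul_inv_iff_mul_eq, ← Commute.inv_left_iff]
  rfl

lemma quotient (hreg : IsRegularPGroup p P) (N : Subgroup P) [N.Normal] :
    IsRegularPGroup p (P ⧸ N) := by
  intro x y
  obtain ⟨x, rfl⟩ := QuotientGroup.mk'_surjective N x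
  obtain ⟨y, rfl⟩ := QuotientGroup.mk'_surjective N y
  obtain ⟨z, hz, hxyz⟩ := hreg x y
  set H := closure {x, y}
  have hH : closure {QuotientGroup.mk' N x, QuotientGroup.mk' N y} =
      H.map (QuotientGroup.mk' N) := by
    rw [MonoidHom.map_closure, Set.image_pair]
  have hMho : MhoOne p ⁅H, H⁆ ≤
      (MhoOne p (⁅H, H⁆.map (QuotientGroup.mk' N))).comap (QuotientGroup.mk' N) := by
    refine (closure_le _).2 ?_
    rintro _ ⟨u, hu, rfl⟩
    exact subset_closure ⟨_, ⟨u, hu, rfl⟩, map_pow _ _ _⟩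
  refine ⟨QuotientGroup.mk' N z, ?_, by simp only [← map_pow, ← map_mul, hxyz]⟩
  rw [hH, ← map_commutator]
  exact hMho hz

lemma commutator_pow_left_mem_iff [Finite P] [Group.IsNilpotent P]
    (hreg : IsRegularPGroup p P) (N : Subgroup P) [N.Normal] {x y : P} :
    ⁅x ^ p, y⁆ ∈ N ↔ ⁅x, y⁆ ^ p ∈ N := by
  have h := (hreg.quotient N).commutator_pow_left_eq_one_iff
    (x := QuotientGroup.mk' N x) (y := QuotientGroup.mk' N y)
  simpa only [← map_pow, ← map_commutatorElement, ← MonoidHom.mem_ker, QuotientGroup.ker_mk']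
    using h

lemma pow_mem_upperCentralSeries [Finite P] [Group.IsNilpotent P] (hreg : IsRegularPGroup p P)
    {m : ℕ} (hm : ∀ u ∈ Subgroup.lowerCentralSeries (⊤ : Subgroup P) m, u ^ p = 1) (x : P) :
    x ^ p ∈ Subgroup.upperCentralSeries P m := by
  suffices ∀ i j, i + j = m → ∀ u ∈ Subgroup.lowerCentralSeries (⊤ : Subgroup P) i,
      u ^ p ∈ Subgroup.upperCentralSeries P j from this 0 m (zero_add m) x (mem_top x)
  intro i j
  induction j generalizing i with
  | zero =>
    rintro rfl u hu
    exact mem_bot.2 (hm u hu)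
  | succ j ih =>
    intro hij u hu y
    refine (hreg.commutator_pow_left_mem_iff (Subgroup.upperCentralSeries P j)).2 ?_
    exact ih (i + 1) (by lia) _ (commutator_mem_commutator hu (mem_top y))

lemma pow_eq_one_of_mem_omegaOne_top [Finite P] [Group.IsNilpotent P]
    (hreg : IsRegularPGroup p P) {u : P} (hu : u ∈ omegaOne p (⊤ : Subgroup P)) : u ^ p = 1 :=
  pow_eq_one_of_mem_omegaOne
    (fun _ _ _ _ hv hw => hreg.mul_pow_eq_one (by rw [hv, hw, mul_one])) hu

lemma index_le_card_omegaOne [Finite P] [Group.IsNilpotent P] (hreg : IsRegularPGroup p P)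
    {K : Subgroup P} (hK : ∀ x, x ^ p ∈ K) :
    K.index ≤ Nat.card (omegaOne p (⊤ : Subgroup P)) := by
  set Ω := omegaOne p (⊤ : Subgroup P)
  have hΩ : Ω.index ≤ Nat.card K := by
    refine Nat.card_le_card_of_injective (fun a : P ⧸ Ω => (⟨a.out ^ p, hK _⟩ : K)) ?_
    intro a b hab
    rw [← a.out_eq', ← b.out_eq', QuotientGroup.eq]
    exact mem_omegaOne_of_pow_eq_one (mem_top _)
      (hreg.inv_mul_pow_eq_one_iff.2 (congrArg Subtype.val hab))
  refine Nat.le_of_mul_le_mul_right ?_ (Nat.card_pos (α := K))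
  calc
    K.index * Nat.card K = Nat.card Ω * Ω.index := by rw [index_mul_card, card_mul_index]
    _ ≤ Nat.card Ω * Nat.card K := Nat.mul_le_mul_left _ hΩ

lemma upperCentralSeries_eq_top_of_lowerCentralSeries_le_omegaOne [Finite P]
    (hp : p.Prime) (hreg : IsRegularPGroup p P) (hP : IsPGroup p P) {m w : ℕ}
    (hm : Subgroup.lowerCentralSeries (⊤ : Subgroup P) (m + 1) ≤ omegaOne p ⊤)
    (hw : Nat.card (omegaOne p (⊤ : Subgroup P)) = p ^ (w + 1)) :
    Subgroup.upperCentralSeries P (m + w + 1) = ⊤ := by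
  have := Fact.mk hp
  have := hP.isNilpotent
  obtain ⟨v, hv⟩ := hP.index (Subgroup.upperCentralSeries P (m + 1))
  have hle : p ^ v ≤ p ^ (w + 1) := by
    rw [← hv, ← hw]
    exact hreg.index_le_card_omegaOne (hreg.pow_mem_upperCentralSeries
      fun u hu => hreg.pow_eq_one_of_mem_omegaOne_top (hm hu))
  refine upperCentralSeries_eq_top_of_index_dvd_prime_pow hp (hv ▸ pow_dvd_pow p ?_)
  exact (Nat.pow_le_pow_iff_right hp.one_lt).1 hle

lemma lowerCentralSeries_succ_eq_bot_of_pow_dvd_exponent [Finite P] (hp : p.Prime)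
    (hreg : IsRegularPGroup p P) {e f : ℕ} (hcard : Nat.card P = p ^ (e + f))
    (hexp : p ^ e ∣ Monoid.exponent P) :
    Subgroup.lowerCentralSeries (⊤ : Subgroup P) (f + 1) = ⊥ := by
  have := Fact.mk hp
  induction e generalizing P f with
  | zero =>
    have := (IsPGroup.of_card hcard).isNilpotent
    have hindex : (Subgroup.upperCentralSeries P 1).index ∣ p ^ (f + 1) :=
      (index_dvd_card _).trans (hcard ▸ pow_dvd_pow p (by lia))
    rw [lowerCentralSeries_eq_bot_iff_upperCentralSeries_eq_top]
    simpa only [zero_add] using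
      upperCentralSeries_eq_top_of_index_dvd_prime_pow hp (m := 0) hindex
  | succ e ih =>
    have hP := IsPGroup.of_card hcard
    have := hP.isNilpotent
    set Ω := omegaOne p (⊤ : Subgroup P)
    obtain ⟨w, hw⟩ : ∃ w, Nat.card Ω = p ^ (w + 1) := by
      refine exists_card_omegaOne_eq_pow_succ hp (hP.to_subgroup ⊤) ?_
      rw [card_top, hcard]
      exact dvd_pow_self p (by lia)
    have hexpQ : p ^ e ∣ Monoid.exponent (P ⧸ Ω) := by
      have h := hexp.trans
        (exponent_dvd_exponent_quotient_mul fun _ => hreg.pow_eq_one_of_mem_omegaOne_top)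
      rw [pow_succ] at h
      exact Nat.dvd_of_mul_dvd_mul_right hp.pos h
    obtain ⟨f', hcardQ⟩ : ∃ f', Nat.card (P ⧸ Ω) = p ^ (e + f') := by
      obtain ⟨k, hk⟩ := IsPGroup.iff_card.1 (hP.to_quotient Ω)
      exact ⟨k - e, by rw [hk, Nat.add_sub_cancel' (le_of_pow_dvd_exponent hp hk hexpQ)]⟩
    obtain rfl : f = f' + w := by
      have h := Ω.card_eq_card_quotient_mul_card_subgroup
      rw [hcard, hcardQ, hw, ← pow_add] at h
      have := Nat.pow_right_injective hp.two_le h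
      lia
    have hγ := lowerCentralSeries_le_of_quotient_eq_bot (ih (hreg.quotient Ω) hcardQ hexpQ)
    exact lowerCentralSeries_eq_bot_iff_upperCentralSeries_eq_top.2
      (hreg.upperCentralSeries_eq_top_of_lowerCentralSeries_le_omegaOne hp hP hγ hw)

end IsRegularPGroup

/-- Let `P` be a finite regular `p`-group of order `p ^ n` and
exponent `p ^ e`, so that `f(P) = n - e`.  Then the nilpotency class of `P` is at most
`f(P) + 1`; equivalently the `(f(P)+1)`-st term of the lower central series is trivial. -/
theorem regular_class_bound (p n e : ℕ) (hp : p.Prime) (P : Type) [Group P] [Finite P]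
    (hcard : Nat.card P = p ^ n) (hexp : Monoid.exponent P = p ^ e)
    (hreg : IsRegularPGroup p P) :
    Subgroup.lowerCentralSeries (⊤ : Subgroup P) ((n - e) + 1) = ⊥ := by
  have hen : e ≤ n := le_of_pow_dvd_exponent hp hcard hexp.symm.dvd
  rw [← Nat.add_sub_cancel' hen] at hcard
  exact hreg.lowerCentralSeries_succ_eq_bot_of_pow_dvd_exponent hp hcard hexp.symm.dvd
end

section
/- Let P be a finite p-group with p > f(P) + 1. Then P is a regular p-group. -/
/-!
Put `H = ⟨x, y⟩`. In `Q = H / ℧₁(γ₂(H))`, where `γ₂` has exponent `p`, one has to show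
`x ^ p * y ^ p = (x * y) ^ p`. By the Hall–Petrescu formula
`x ^ p * y ^ p = (x * y) ^ p * c₂ ^ (p.choose 2) * ⋯ * c_p` with `c_k ∈ γ_k(Q)`, so it is enough
that `γ_p(Q) = 1`. An element of order `exp P` generates a cyclic subgroup of index at most
`p ^ (p - 2)`, hence `Q` has such a subgroup `C` as well. If `C ≠ Q`, then `C` and `γ₂` lie in a
common maximal subgroup, so `|γ₂ : C ∩ γ₂| ≤ |Q : C| / p`, whereas `|C ∩ γ₂| ≤ p`. Thus
`|γ₂(Q)| ≤ p ^ (p - 2)`, and the lower central series, dropping by a factor of at least `p` at each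
step, is trivial from `γ_p` on.

The Hall–Petrescu formula is Newton interpolation for polynomial sequences in a filtered group:
those `g` whose `j`-th iterated differences lie in the `j`-th term of the filtration. They form a
group (Lazard, Leibman), because the condition for `j ≤ d + 1` on `g` amounts to the one for `j ≤ d`
on the sequence `n ↦ (g n, g (n + 1))` in a filtration of `G × G`.
-/

open scoped commutatorElement

universe u

/-- A decreasing sequence of subgroups `F 0 ≥ F 1 ≥ ⋯` with `⁅F i, F j⁆ ≤ F (i + j)`, with respect
to which polynomial sequences are defined. `F 0` may be a proper subgroup. -/
structure GroupFiltration (G : Type u) [Group G] where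
  term : ℕ → Subgroup G
  antitone : Antitone term
  commutatorElement_mem {i j : ℕ} {a b : G} (ha : a ∈ term i) (hb : b ∈ term j) :
    ⁅a, b⁆ ∈ term (i + j)

section LowerCentralSeries

open Subgroup

variable {G : Type u} [Group G]

theorem commutator_commutator_le_of_rotate {A B C N : Subgroup G} [N.Normal]
    (h₁ : ⁅⁅B, C⁆, A⁆ ≤ N) (h₂ : ⁅⁅C, A⁆, B⁆ ≤ N) : ⁅⁅A, B⁆, C⁆ ≤ N := by
  have le_iff (K : Subgroup G) : K ≤ N ↔ K.map (QuotientGroup.mk' N) = ⊥ := by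
    rw [Subgroup.map_eq_bot_iff, QuotientGroup.ker_mk']
  simp only [le_iff, map_commutator] at h₁ h₂ ⊢
  exact commutator_commutator_eq_bot_of_rotate h₁ h₂

theorem commutator_lowerCentralSeries_le (i j : ℕ) :
    ⁅(⊤ : Subgroup G).lowerCentralSeries i, (⊤ : Subgroup G).lowerCentralSeries j⁆ ≤
      (⊤ : Subgroup G).lowerCentralSeries (i + j + 1) := by
  induction j generalizing i with
  | zero => exact le_rfl
  | succ j ih =>
    rw [commutator_comm, Subgroup.lowerCentralSeries_succ]
    apply commutator_commutator_le_of_rotate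
    · rw [commutator_comm ⊤, ← Subgroup.lowerCentralSeries_succ]
      exact (ih (i + 1)).trans_eq (by congr 1; lia)
    · exact commutator_mono (ih i) le_rfl

variable (G) in
/-- The filtration `G, G, γ₂ G, γ₃ G, …`: since `lowerCentralSeries` starts at `γ₁ G = G`, its
index is shifted by one, and truncated subtraction repeats `G` in degrees `0` and `1`. -/
def lowerCentralFiltration : GroupFiltration G where
  term i := (⊤ : Subgroup G).lowerCentralSeries (i - 1)
  antitone _ _ hij := Subgroup.lowerCentralSeries_antitone _ (Nat.sub_le_sub_right hij 1)
  commutatorElement_mem {i j} _ _ ha hb :=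
    Subgroup.lowerCentralSeries_antitone _ (by lia)
      (commutator_lowerCentralSeries_le (i - 1) (j - 1) (commutator_mem_commutator ha hb))

end LowerCentralSeries

namespace GroupFiltration

variable {G : Type u} [Group G] (F : GroupFiltration G)

theorem conj_mem {i : ℕ} {g a : G} (hg : g ∈ F.term 0) (ha : a ∈ F.term i) :
    g * a * g⁻¹ ∈ F.term i := by
  have hcomm : ⁅g, a⁆ ∈ F.term (0 + i) := F.commutatorElement_mem hg ha
  rw [show g * a * g⁻¹ = ⁅g, a⁆ * a by group]
  exact mul_mem (Nat.zero_add i ▸ hcomm) ha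

theorem conj_inv_mem {i : ℕ} {g a : G} (hg : g ∈ F.term 0) (ha : a ∈ F.term i) :
    g⁻¹ * a * g ∈ F.term i := by
  simpa using F.conj_mem (inv_mem hg) ha

theorem inv_commutatorElement_mul_mem {i j : ℕ} {a u c v : G} (ha : a ∈ F.term i)
    (hu : u ∈ F.term (i + 1)) (hc : c ∈ F.term j) (hv : v ∈ F.term (j + 1)) :
    ⁅a, c⁆⁻¹ * ⁅a * u, c * v⁆ ∈ F.term (i + j + 1) := by
  have mem_zero {k : ℕ} {g : G} (hg : g ∈ F.term k) : g ∈ F.term 0 := F.antitone k.zero_le hg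
  have hcv : c * v ∈ F.term j := mul_mem hc (F.antitone j.le_succ hv)
  have left : ⁅u, c * v⁆ ∈ F.term (i + j + 1) := by
    simpa only [Nat.add_right_comm] using F.commutatorElement_mem hu hcv
  have right : ⁅a, v⁆ ∈ F.term (i + (j + 1)) := F.commutatorElement_mem ha hv
  have expand : ⁅a, c⁆⁻¹ * ⁅a * u, c * v⁆ =
      ⁅a, c⁆⁻¹ * (a * ⁅u, c * v⁆ * a⁻¹) * ⁅a, c⁆ * (c * ⁅a, v⁆ * c⁻¹) := by group
  rw [expand]
  exact mul_mem
    (F.conj_inv_mem (mem_zero (F.commutatorElement_mem ha hc)) (F.conj_mem (mem_zero ha) left))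
    (F.conj_mem (mem_zero hc) right)

/-- The filtration on `G × G` whose `i`-th term consists of the pairs in `F i` that agree
modulo `F (i + 1)`. For the pair `(g n, g (n + 1))` this puts the difference of `g` one term
deeper than `g` itself. -/
def square : GroupFiltration (G × G) where
  term i :=
    { carrier := {x | x.1 ∈ F.term i ∧ x.1⁻¹ * x.2 ∈ F.term (i + 1)}
      one_mem' := by simp
      mul_mem' := by
        rintro ⟨a, b⟩ ⟨c, d⟩ ⟨ha, hab⟩ ⟨hc, hcd⟩
        refine ⟨mul_mem ha hc, ?_⟩
        change (a * c)⁻¹ * (b * d) ∈ F.term (i + 1)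
        rw [show (a * c)⁻¹ * (b * d) = c⁻¹ * (a⁻¹ * b) * c * (c⁻¹ * d) by group]
        exact mul_mem (F.conj_inv_mem (F.antitone i.zero_le hc) hab) hcd
      inv_mem' := by
        rintro ⟨a, b⟩ ⟨ha, hab⟩
        refine ⟨inv_mem ha, ?_⟩
        change a⁻¹⁻¹ * b⁻¹ ∈ F.term (i + 1)
        rw [show a⁻¹⁻¹ * b⁻¹ = a * (a⁻¹ * b)⁻¹ * a⁻¹ by group]
        exact F.conj_mem (F.antitone i.zero_le ha) (inv_mem hab) }
  antitone _ _ hij _ hx := ⟨F.antitone hij hx.1, F.antitone (Nat.succ_le_succ hij) hx.2⟩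
  commutatorElement_mem := by
    rintro i j ⟨a, b⟩ ⟨c, d⟩ ⟨ha, hab⟩ ⟨hc, hcd⟩
    refine ⟨F.commutatorElement_mem ha hc, ?_⟩
    have := F.inv_commutatorElement_mul_mem ha hab hc hcd
    rwa [mul_inv_cancel_left, mul_inv_cancel_left] at this

end GroupFiltration

/-- The homomorphism taking a sequence `g` to `n ↦ (g n, g (n + 1))`. -/
def shiftPair (G : Type u) [Group G] : (ℕ → G) →* (ℕ → G × G) where
  toFun g n := (g n, g (n + 1))
  map_one' := rfl
  map_mul' _ _ := rfl

/-- Sequences that are polynomial to order `d`, that is, sequences `g` whose `j`-th iterated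
difference takes values in `F j` for all `j ≤ d`, where the difference of `g` is
`n ↦ (g n)⁻¹ * g (n + 1)`. The recursion via `GroupFiltration.square` makes it evident that
they form a group. -/
def polySeq : ℕ → {G : Type u} → [Group G] → GroupFiltration G → Subgroup (ℕ → G)
  | 0, _, _, F => Subgroup.pi Set.univ fun _ => F.term 0
  | d + 1, G, _, F => (polySeq d F.square).comap (shiftPair G)

section PolySeq

variable {G : Type u} [Group G] {F : GroupFiltration G}

theorem mem_polySeq_zero {g : ℕ → G} : g ∈ polySeq 0 F ↔ ∀ n, g n ∈ F.term 0 := by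
  simp [polySeq, Subgroup.mem_pi]

theorem mem_polySeq_succ {d : ℕ} {g : ℕ → G} :
    g ∈ polySeq (d + 1) F ↔ (fun n => (g n, g (n + 1))) ∈ polySeq d F.square :=
  Iff.rfl

theorem pow_choose_mem_polySeq (d : ℕ) {k : ℕ} {a : G} (ha : a ∈ F.term k) :
    (fun n => a ^ n.choose k) ∈ polySeq d F := by
  induction d generalizing G k with
  | zero => exact mem_polySeq_zero.2 fun n => pow_mem (F.antitone k.zero_le ha) _
  | succ d ih =>
    have diag : (a, a) ∈ F.square.term k := ⟨ha, by simp⟩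
    rw [mem_polySeq_succ]
    cases k with
    | zero => simpa using ih diag
    | succ k =>
      have edge : ((1 : G), a) ∈ F.square.term k := ⟨one_mem _, by simpa using ha⟩
      convert mul_mem (ih edge) (ih diag) using 2 with n
      ext <;> simp [Nat.choose_succ_succ, pow_add]

theorem apply_mem_of_forall_lt_eq_one {d m : ℕ} (hm : m ≤ d) {g : ℕ → G} (hg : g ∈ polySeq d F)
    (h : ∀ i < m, g i = 1) : g m ∈ F.term m := by
  induction d generalizing G m with
  | zero => exact Nat.le_zero.1 hm ▸ mem_polySeq_zero.1 hg m
  | succ d ih =>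
    rw [mem_polySeq_succ] at hg
    cases m with
    | zero => exact (ih d.zero_le hg (by simp)).1
    | succ m =>
      have := (ih (Nat.le_of_succ_le_succ hm) hg fun i hi => by
        simp [h i (by lia), h (i + 1) (by lia)]).2
      simpa [h m m.lt_succ_self] using this

end PolySeq

section NewtonInterpolation

variable {G : Type u} [Group G]

/-- The product `c₀ * c₁ ^ n * c₂ ^ (n.choose 2) * ⋯`, as a function of `n`, of `m` factors with
the unique `c₀, …, c_{m-1}` for which it agrees with `g` at `0, …, m - 1`. -/
def newtonInterp (g : ℕ → G) : ℕ → ℕ → G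
  | 0 => 1
  | m + 1 => newtonInterp g m * fun n => ((newtonInterp g m m)⁻¹ * g m) ^ n.choose m

/-- The coefficient of `n.choose m` in the Newton interpolation of `g`. -/
def newtonCoeff (g : ℕ → G) (m : ℕ) : G := (newtonInterp g m m)⁻¹ * g m

theorem newtonInterp_succ (g : ℕ → G) (m n : ℕ) :
    newtonInterp g (m + 1) n = newtonInterp g m n * newtonCoeff g m ^ n.choose m :=
  rfl

theorem newtonInterp_apply_of_lt (g : ℕ → G) {m n : ℕ} (h : n < m) :
    newtonInterp g m n = g n := by
  induction m with
  | zero => simp at h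
  | succ m ih =>
    rw [newtonInterp_succ]
    rcases Nat.lt_succ_iff_lt_or_eq.1 h with hn | rfl
    · simp [ih hn, Nat.choose_eq_zero_of_lt hn]
    · simp [newtonCoeff]

variable {F : GroupFiltration G} {d m : ℕ} {g : ℕ → G}

theorem newtonCoeff_mem_of_newtonInterp_mem (hg : g ∈ polySeq d F)
    (hI : newtonInterp g m ∈ polySeq d F) (hm : m ≤ d) : newtonCoeff g m ∈ F.term m :=
  apply_mem_of_forall_lt_eq_one (g := (newtonInterp g m)⁻¹ * g) hm (mul_mem (inv_mem hI) hg)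
    fun i hi => by simp [newtonInterp_apply_of_lt g hi]

theorem newtonInterp_mem_polySeq (hg : g ∈ polySeq d F) (hm : m ≤ d + 1) :
    newtonInterp g m ∈ polySeq d F := by
  induction m with
  | zero => exact one_mem _
  | succ m ih =>
    have hI := ih (by lia)
    exact mul_mem hI
      (pow_choose_mem_polySeq d (newtonCoeff_mem_of_newtonInterp_mem hg hI (by lia)))

theorem newtonCoeff_mem (hg : g ∈ polySeq d F) (hm : m ≤ d) : newtonCoeff g m ∈ F.term m :=
  newtonCoeff_mem_of_newtonInterp_mem hg (newtonInterp_mem_polySeq hg (by lia)) hm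

theorem newtonInterp_add_two_eq_prod (h₀ : g 0 = 1) (h₁ : g 1 = 1) (m n : ℕ) :
    newtonInterp g (m + 2) n =
      ((List.range m).map fun k => newtonCoeff g (k + 2) ^ n.choose (k + 2)).prod := by
  induction m with
  | zero => simp [newtonInterp, h₀, h₁]
  | succ m ih =>
    rw [newtonInterp_succ, ih, List.range_succ, List.map_append, List.prod_append,
      List.map_singleton, List.prod_singleton]

end NewtonInterpolation

section PowerFormulas

open Subgroup

variable {G : Type u} [Group G]

theorem exists_pow_mul_pow_eq_mul_prod_pow_choose (x y : G) (n : ℕ) :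
    ∃ c : ℕ → G, (∀ k < n - 1, c k ∈ (⊤ : Subgroup G).lowerCentralSeries (k + 1)) ∧
      x ^ n * y ^ n =
        (x * y) ^ n * ((List.range (n - 1)).map fun k => c k ^ n.choose (k + 2)).prod := by
  let g : ℕ → G := fun m => ((x * y) ^ m)⁻¹ * (x ^ m * y ^ m)
  have pow_mem_polySeq (a : G) : (fun m => a ^ m) ∈ polySeq n (lowerCentralFiltration G) := by
    simpa using pow_choose_mem_polySeq n (show a ∈ (lowerCentralFiltration G).term 1 from mem_top a)
  have hg : g ∈ polySeq n (lowerCentralFiltration G) :=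
    mul_mem (inv_mem (pow_mem_polySeq (x * y))) (mul_mem (pow_mem_polySeq x) (pow_mem_polySeq y))
  refine ⟨fun k => newtonCoeff g (k + 2), fun k hk => newtonCoeff_mem (m := k + 2) hg (by lia), ?_⟩
  rw [← newtonInterp_add_two_eq_prod (by simp [g]) (by simp [g]),
    newtonInterp_apply_of_lt g (by lia), mul_inv_cancel_left]

theorem mul_pow_of_lowerCentralSeries_eq_bot {p : ℕ} (hp : p.Prime)
    (hclass : (⊤ : Subgroup G).lowerCentralSeries (p - 1) = ⊥)
    (hexp : ∀ a ∈ commutator G, a ^ p = 1) (x y : G) : (x * y) ^ p = x ^ p * y ^ p := by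
  obtain ⟨c, hc, h⟩ := exists_pow_mul_pow_eq_mul_prod_pow_choose x y p
  suffices ∀ k < p - 1, c k ^ p.choose (k + 2) = 1 by
    rw [h, List.prod_eq_one (by simpa using this), mul_one]
  intro k hk
  obtain hlt | heq : k + 2 < p ∨ k + 1 = p - 1 := by lia
  · obtain ⟨r, hr⟩ := hp.dvd_choose_self (by lia) hlt
    have hck : c k ∈ commutator G :=
      Subgroup.lowerCentralSeries_antitone ⊤ (Nat.succ_le_succ k.zero_le) (hc k hk)
    rw [hr, pow_mul, hexp _ hck, one_pow]
  · have hck : c k ∈ (⊥ : Subgroup G) := hclass ▸ heq ▸ hc k hk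
    rw [mem_bot.1 hck, one_pow]

end PowerFormulas

section NilpotencyBounds

open Subgroup

variable {G : Type u} [Group G]

theorem commutator_le_of_isCoatom [Group.IsNilpotent G] {M : Subgroup G} (hM : IsCoatom M) :
    commutator G ≤ M := by
  have : M.Normal := Group.normalizerCondition_of_isNilpotent.normal_of_coatom M hM
  obtain ⟨g, hg⟩ := SetLike.exists_not_mem_of_ne_top M hM.1 rfl
  have hsup : M ⊔ zpowers g = ⊤ :=
    hM.2 _ (left_lt_sup.2 fun h => hg (h (mem_zpowers g)))
  exact Normal.commutator_le_of_self_sup_commutative_eq_top hsup inferInstance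

theorem lowerCentralSeries_eq_bot_of_succ_eq [Group.IsNilpotent G] {j : ℕ}
    (h : (⊤ : Subgroup G).lowerCentralSeries (j + 1) = (⊤ : Subgroup G).lowerCentralSeries j) :
    (⊤ : Subgroup G).lowerCentralSeries j = ⊥ := by
  have stable (i : ℕ) :
      (⊤ : Subgroup G).lowerCentralSeries (j + i) = (⊤ : Subgroup G).lowerCentralSeries j := by
    induction i with
    | zero => rfl
    | succ i ih =>
      rw [← add_assoc, Subgroup.lowerCentralSeries_succ, ih, ← Subgroup.lowerCentralSeries_succ, h]
  obtain ⟨n, hn⟩ := Subgroup.nilpotent_iff_lowerCentralSeries.1 ‹Group.IsNilpotent G›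
  rw [← stable n, eq_bot_iff, ← hn]
  exact Subgroup.lowerCentralSeries_antitone _ (by lia)

variable [Finite G] {p : ℕ} [Fact p.Prime]

theorem dvd_relIndex_of_not_le (hG : IsPGroup p G) {H K : Subgroup G} (h : ¬K ≤ H) :
    p ∣ H.relIndex K := by
  obtain ⟨r, hr⟩ := (hG.to_subgroup K).index (H.subgroupOf K)
  rw [relIndex, hr]
  refine dvd_pow_self p fun hr₀ => h ?_
  rwa [hr₀, pow_zero, index_eq_one, subgroupOf_eq_top] at hr

theorem lowerCentralSeries_add_eq_bot_of_card_le (hG : IsPGroup p G) {j k : ℕ}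
    (h : Nat.card ((⊤ : Subgroup G).lowerCentralSeries j) ≤ p ^ k) :
    (⊤ : Subgroup G).lowerCentralSeries (j + k) = ⊥ := by
  have := hG.isNilpotent
  induction k generalizing j with
  | zero => exact eq_bot_of_card_le _ (by simpa using h)
  | succ k ih =>
    set L := (⊤ : Subgroup G).lowerCentralSeries
    have hle : L (j + 1) ≤ L j := Subgroup.lowerCentralSeries_antitone _ j.le_succ
    by_cases hstable : L j ≤ L (j + 1)
    · rw [eq_bot_iff, ← lowerCentralSeries_eq_bot_of_succ_eq (hle.antisymm hstable)]
      exact Subgroup.lowerCentralSeries_antitone _ (by lia)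
    · rw [Nat.add_comm k, ← add_assoc]
      refine ih (Nat.le_of_mul_le_mul_right ?_ (Nat.Prime.pos Fact.out : 0 < p))
      calc Nat.card (L (j + 1)) * p
          ≤ Nat.card (L (j + 1)) * (L (j + 1)).relIndex (L j) := by
            gcongr
            exact Nat.le_of_dvd (Nat.pos_of_ne_zero index_ne_zero_of_finite)
              (dvd_relIndex_of_not_le hG hstable)
        _ = Nat.card (L j) := by
            rw [← relIndex_bot_left, relIndex_mul_relIndex _ _ _ bot_le hle, relIndex_bot_left]
        _ ≤ p ^ k * p := pow_succ p k ▸ h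

theorem mul_relIndex_commutator_le_index (hG : IsPGroup p G) {C : Subgroup G} (hC : C ≠ ⊤) :
    p * C.relIndex (commutator G) ≤ C.index := by
  have := hG.isNilpotent
  obtain ⟨M, hM, hCM⟩ := (eq_top_or_exists_le_coatom C).resolve_left hC
  have hpM : p ∣ M.index := by
    simpa using dvd_relIndex_of_not_le hG fun h : ⊤ ≤ M => hM.1 (top_le_iff.1 h)
  calc p * C.relIndex (commutator G)
      ≤ M.index * C.relIndex M :=
        Nat.mul_le_mul (Nat.le_of_dvd (Nat.pos_of_ne_zero index_ne_zero_of_finite) hpM)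
          (relIndex_le_of_le_right (commutator_le_of_isCoatom hM) index_ne_zero_of_finite)
    _ = C.index := by rw [mul_comm, relIndex_mul_index hCM]

theorem card_commutator_le_index (hG : IsPGroup p G) (hexp : ∀ a ∈ commutator G, a ^ p = 1)
    (C : Subgroup G) [IsCyclic C] : Nat.card (commutator G) ≤ C.index := by
  obtain rfl | hC := eq_or_ne C ⊤
  · have : IsCyclic G := isCyclic_of_surjective _ (topEquiv (G := G)).surjective
    simp [commutator_eq_bot]
  · have hcyc : IsCyclic (C ⊓ commutator G : Subgroup G) := isCyclic_of_le inf_le_left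
    calc Nat.card (commutator G)
        = Nat.card (C ⊓ commutator G : Subgroup G) * C.relIndex (commutator G) := by
          rw [← relIndex_bot_left, ← inf_relIndex_right C, ← relIndex_bot_left,
            relIndex_mul_relIndex _ _ _ bot_le inf_le_right]
      _ ≤ p * C.relIndex (commutator G) := by
          gcongr
          rw [← IsCyclic.exponent_eq_card]
          exact Nat.le_of_dvd (Nat.Prime.pos Fact.out)
            (Monoid.exponent_dvd_of_forall_pow_eq_one fun a => Subtype.ext (hexp a a.2.2))
      _ ≤ C.index := mul_relIndex_commutator_le_index hG hC

theorem mul_pow_of_isCyclic_of_index_le (hG : IsPGroup p G)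
    (hexp : ∀ a ∈ commutator G, a ^ p = 1) (C : Subgroup G) [IsCyclic C]
    (hC : C.index ≤ p ^ (p - 2)) (x y : G) : (x * y) ^ p = x ^ p * y ^ p := by
  have hp : p.Prime := Fact.out
  refine mul_pow_of_lowerCentralSeries_eq_bot hp ?_ hexp x y
  rw [show p - 1 = 1 + (p - 2) by have := hp.two_le; lia]
  apply lowerCentralSeries_add_eq_bot_of_card_le hG
  rw [top_lowerCentralSeries_one]
  exact (card_commutator_le_index hG hexp C).trans hC

end NilpotencyBounds

theorem exists_isCyclic_index_eq {G : Type u} [Group G] {p n e : ℕ} (hp : p.Prime)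
    (hcard : Nat.card G = p ^ n) (hexp : Monoid.exponent G = p ^ e) :
    ∃ C : Subgroup G, IsCyclic C ∧ C.index = p ^ (n - e) := by
  obtain ⟨g, hg⟩ := hp.exists_orderOf_eq_pow_factorization_exponent G
  rw [hexp, hp.factorization_pow, Finsupp.single_eq_same] at hg
  have hle : e ≤ n := (Nat.pow_dvd_pow_iff_le_right hp.one_lt).1
    (hexp ▸ hcard ▸ Group.exponent_dvd_nat_card)
  refine ⟨Subgroup.zpowers g, inferInstance, Nat.eq_of_mul_eq_mul_left (pow_pos hp.pos e) ?_⟩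
  rw [← pow_add, Nat.add_sub_cancel' hle, ← hcard, ← Subgroup.card_mul_index (Subgroup.zpowers g),
    Nat.card_zpowers, hg]

section Regularity

open Subgroup

variable {p : ℕ}

theorem map_mhoOne {G G' : Type} [Group G] [Group G'] (f : G →* G') (H : Subgroup G) :
    (MhoOne p H).map f = MhoOne p (H.map f) := by
  rw [MhoOne, MhoOne, MonoidHom.map_closure]
  congr 1
  ext y
  constructor
  · rintro ⟨_, ⟨x, hx, rfl⟩, rfl⟩
    exact ⟨f x, mem_map_of_mem f hx, map_pow f x p⟩
  · rintro ⟨_, ⟨x, hx, rfl⟩, rfl⟩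
    exact ⟨x ^ p, ⟨x, hx, rfl⟩, map_pow f x p⟩

theorem mhoOne_normal {G : Type} [Group G] (H : Subgroup G) [H.Normal] : (MhoOne p H).Normal :=
  normal_iff_map_conj_eq.2 fun g => by rw [map_mhoOne, Normal.map_conj_eq]

variable {G : Type} [Group G] [Finite G] [Fact p.Prime]

theorem inv_mul_pow_mul_mem_mhoOne_commutator (hG : IsPGroup p G) (C : Subgroup G) [IsCyclic C]
    (hC : C.index ≤ p ^ (p - 2)) (x y : G) :
    ((x * y) ^ p)⁻¹ * (x ^ p * y ^ p) ∈ MhoOne p (commutator G) := by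
  set N := MhoOne p (commutator G)
  have : N.Normal := mhoOne_normal _
  let π := QuotientGroup.mk' N
  have hπ : Function.Surjective π := QuotientGroup.mk'_surjective _
  have hcomm : (commutator G).map π = commutator (G ⧸ N) := by
    rw [map_commutator_eq, MonoidHom.range_eq_top.2 hπ, commutator_def]
  have hexp : ∀ a ∈ commutator (G ⧸ N), a ^ p = 1 := by
    rw [← hcomm]
    rintro _ ⟨a, ha, rfl⟩
    rw [← map_pow]
    exact (QuotientGroup.eq_one_iff _).2 (subset_closure ⟨a, ha, rfl⟩)
  have : IsCyclic (C.map π) := isCyclic_of_surjective _ (π.subgroupMap_surjective C)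
  have hindex : (C.map π).index ≤ p ^ (p - 2) :=
    (Nat.le_of_dvd (Nat.pos_of_ne_zero index_ne_zero_of_finite) (C.index_map_dvd hπ)).trans hC
  rw [← QuotientGroup.eq]
  exact mul_pow_of_isCyclic_of_index_le (hG.to_quotient _) hexp (C.map π) hindex (π x) (π y)

theorem isRegularPGroup_of_isCyclic_of_index_le (hG : IsPGroup p G) (C : Subgroup G) [IsCyclic C]
    (hC : C.index ≤ p ^ (p - 2)) : IsRegularPGroup p G := by
  intro x y
  set H := closure {x, y}
  let x' : H := ⟨x, subset_closure (by simp)⟩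
  let y' : H := ⟨y, subset_closure (by simp)⟩
  have : IsCyclic (C.subgroupOf H) :=
    isCyclic_of_injective (H.subtype.subgroupComap C) fun _ _ h =>
      Subtype.ext (H.subtype_injective (congrArg C.subtype h))
  have hindex : (C.subgroupOf H).index ≤ p ^ (p - 2) :=
    calc C.relIndex H ≤ C.relIndex ⊤ := relIndex_le_of_le_right le_top index_ne_zero_of_finite
      _ ≤ p ^ (p - 2) := C.relIndex_top_right.trans_le hC
  have := mem_map_of_mem H.subtype <|
    inv_mul_pow_mul_mem_mhoOne_commutator (hG.to_subgroup H) (C.subgroupOf H) hindex x' y'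
  rw [map_mhoOne, map_subtype_commutator] at this
  exact ⟨_, this, by simp [x', y']⟩

end Regularity

/-- Let `P` be a finite `p`-group of order `p ^ n` and exponent `p ^ e`,
so that `f(P) = n - e`.  If `p > f(P) + 1` then `P` is a regular `p`-group. -/
theorem regular_of_large_prime (p n e : ℕ) (hp : p.Prime) (P : Type) [Group P] [Finite P]
    (hcard : Nat.card P = p ^ n) (hexp : Monoid.exponent P = p ^ e)
    (hpf : p > (n - e) + 1) :
    IsRegularPGroup p P := by
  have : Fact p.Prime := ⟨hp⟩
  obtain ⟨C, hcyc, hindex⟩ := exists_isCyclic_index_eq hp hcard hexp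
  apply isRegularPGroup_of_isCyclic_of_index_le (IsPGroup.of_card hcard) C
  exact hindex.trans_le (Nat.pow_le_pow_right hp.pos (by lia))
end
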